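/- arXiv:2211.10313 — 3 statements merged into one kernel-verified Lean document; each statement's English description precedes it below -/
import Mathlib

section
/- The ring A(1,2,2), i.e., the ring of 2×2 upper triangular matrices over F_2, has covering number σ(A(1,2,2)) = 3; the ring A(1,4,4), i.e., the ring of 2×2 upper triangular matrices over F_4, has covering number σ(A(1,4,4)) = 4; and neither of these rings is σ-elementary. -/
/-!
Let `R` be the ring of upper triangular matrices over `F`, and `J` its ideal of strictly upper
triangular matrices, so that `R / J ≅ F × F`.

Upper bounds: covers of `F × F` by proper subrings pull back to `R` and to `R / J`. Over `F₂` the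
three subrings `x = 0`, `y = 0`, `x = y` cover `F × F`. Over `F₄` the four subrings `x² = x`,
`y² = y`, `x = y`, `y = x²` do, since two elements outside `F₂` are equal or Frobenius conjugate.

Lower bounds: if any two of `n` given elements generate `R`, distinct ones must lie in distinct
members of a cover, so `σ(R) ≥ n` (`le_coveringNumber_of_generate`). Such elements exist with
`n = 3` over `F₂` and `n = 4` over `F₄` (`generate_F4`).

Hence `σ(R / J) ≤ n = σ(R)` with `J ≠ 0`, and `R` is not σ-elementary
(`eq_and_not_isSigmaElementary`).
-/

open scoped Classical

noncomputable section

/-- A (finite) cover of a not-necessarily-unital ring: a finite collection of proper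
subrings whose set-theoretic union is all of `R`. -/
def IsRingCover (R : Type*) [NonUnitalRing R] (C : Finset (NonUnitalSubring R)) : Prop :=
  (∀ S ∈ C, S ≠ (⊤ : NonUnitalSubring R)) ∧ ∀ r : R, ∃ S ∈ C, r ∈ S

/-- The covering number `σ(R)`: the least cardinality of a cover of `R`,
or `⊤` if no cover exists. -/
noncomputable def coveringNumber (R : Type*) [NonUnitalRing R] : ℕ∞ :=
  sInf {c : ℕ∞ | ∃ C : Finset (NonUnitalSubring R), IsRingCover R C ∧ (C.card : ℕ∞) = c}

/-- `R` is σ-elementary if `σ(R) < σ(R/I)` for every nonzero two-sided ideal `I`. -/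
def IsSigmaElementary (R : Type*) [NonUnitalRing R] : Prop :=
  ∀ I : TwoSidedIdeal R, I ≠ ⊥ → coveringNumber R < coveringNumber I.ringCon.Quotient

/-- The AGL-type ring `A(n, F1, F2)` as a subring of `(n+1) × (n+1)` matrices over `F`:
top-left `n × n` block with entries in `F1`, arbitrary top-right column, zero bottom-left
row, bottom-right entry in `F2`. -/
def AGL (n : ℕ) {F : Type*} [Field F] (F1 F2 : Subfield F) :
    Subring (Matrix (Fin (n + 1)) (Fin (n + 1)) F) where
  carrier := {M | (∀ i j : Fin n, M i.castSucc j.castSucc ∈ F1) ∧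
      (∀ j : Fin n, M (Fin.last n) j.castSucc = 0) ∧
      M (Fin.last n) (Fin.last n) ∈ F2}
  zero_mem' := by
    refine ⟨fun i j => ?_, fun j => rfl, ?_⟩
    · exact zero_mem F1
    · exact zero_mem F2
  one_mem' := by
    refine ⟨fun i j => ?_, fun j => ?_, ?_⟩
    · rw [Matrix.one_apply]
      split
      · exact one_mem F1
      · exact zero_mem F1
    · exact Matrix.one_apply_ne (Fin.castSucc_lt_last j).ne'
    · rw [Matrix.one_apply_eq]; exact one_mem F2
  add_mem' := by
    rintro a b ⟨ha1, ha2, ha3⟩ ⟨hb1, hb2, hb3⟩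
    refine ⟨fun i j => add_mem (ha1 i j) (hb1 i j), fun j => ?_, add_mem ha3 hb3⟩
    rw [Matrix.add_apply, ha2 j, hb2 j, add_zero]
  neg_mem' := by
    rintro a ⟨ha1, ha2, ha3⟩
    refine ⟨fun i j => neg_mem (ha1 i j), fun j => ?_, neg_mem ha3⟩
    rw [Matrix.neg_apply, ha2 j, neg_zero]
  mul_mem' := by
    rintro a b ⟨ha1, ha2, ha3⟩ ⟨hb1, hb2, hb3⟩
    refine ⟨fun i j => ?_, fun j => ?_, ?_⟩
    · rw [Matrix.mul_apply, Fin.sum_univ_castSucc, hb2 j, mul_zero, add_zero]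
      exact sum_mem fun k _ => mul_mem (ha1 i k) (hb1 k j)
    · rw [Matrix.mul_apply, Fin.sum_univ_castSucc, hb2 j, mul_zero, add_zero]
      exact Finset.sum_eq_zero fun k _ => by rw [ha2 k, zero_mul]
    · rw [Matrix.mul_apply, Fin.sum_univ_castSucc]
      have h0 : ∑ k : Fin n, a (Fin.last n) k.castSucc * b k.castSucc (Fin.last n) = 0 :=
        Finset.sum_eq_zero fun k _ => by rw [ha2 k, zero_mul]
      rw [h0, zero_add]
      exact mul_mem ha3 hb3

/-- The Gaussian (q-)binomial coefficient, via the Pascal-type recurrence. -/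
def gaussBinom (q : ℕ) : ℕ → ℕ → ℕ
  | _, 0 => 1
  | 0, _ + 1 => 0
  | n + 1, k + 1 => gaussBinom q n k + q ^ (k + 1) * gaussBinom q n (k + 1)

/-- The order of `GL(N, Q)` for a prime power `Q`. -/
def GLcard (N Q : ℕ) : ℕ := ∏ k ∈ Finset.range N, (Q ^ N - Q ^ k)



/-! ### Bounds for covering numbers -/

/-- Upper bound from an indexed family of proper subrings, repetitions being allowed. -/
lemma coveringNumber_le_of_family {R : Type*} [NonUnitalRing R] {n : ℕ}
    (S : Fin n → NonUnitalSubring R) (hS : ∀ i, ∃ r, r ∉ S i) (hcov : ∀ r, ∃ i, r ∈ S i) :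
    coveringNumber R ≤ n := by
  have hC : IsRingCover R (Finset.univ.image S) := by
    refine ⟨?_, fun r => ?_⟩
    · intro T hT h
      obtain ⟨i, -, rfl⟩ := Finset.mem_image.1 hT
      obtain ⟨r, hr⟩ := hS i
      exact hr (h ▸ NonUnitalSubring.mem_top r)
    · obtain ⟨i, hi⟩ := hcov r
      exact ⟨S i, Finset.mem_image_of_mem S (Finset.mem_univ i), hi⟩
  have hle : coveringNumber R ≤ ((Finset.univ.image S).card : ℕ∞) := sInf_le ⟨_, hC, rfl⟩
  refine hle.trans ?_
  exact_mod_cast Finset.card_image_le.trans (by simp)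

/-- If any two of `n` elements generate the whole ring, then no proper subring contains two of
them, so a cover needs at least `n` members. -/
lemma le_coveringNumber_of_generate {R : Type*} [NonUnitalRing R] {n : ℕ} (x : Fin n → R)
    (hx : ∀ i j, i < j → ∀ S : NonUnitalSubring R, x i ∈ S → x j ∈ S → S = ⊤) :
    (n : ℕ∞) ≤ coveringNumber R := by
  refine le_sInf ?_
  rintro c ⟨C, ⟨hC, hcov⟩, rfl⟩
  choose S hSC hS using fun i => hcov (x i)
  have hinj : Function.Injective S := by
    intro i j hij
    by_contra hne
    rcases lt_or_gt_of_ne hne with h | h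
    · exact hC _ (hSC i) (hx i j h _ (hS i) (hij ▸ hS j))
    · exact hC _ (hSC i) (hx j i h _ (hij ▸ hS j) (hS i))
  have h := Finset.card_le_card_of_injOn S (s := Finset.univ) (t := C)
    (fun i _ => hSC i) hinj.injOn
  rw [Finset.card_univ, Fintype.card_fin] at h
  exact_mod_cast h

/-- A family of proper subrings covering a homomorphic image pulls back to a cover. -/
lemma coveringNumber_le_of_surjective {R T : Type*} [NonUnitalRing R] [NonUnitalRing T]
    (f : R →ₙ+* T) (hf : Function.Surjective f) {n : ℕ}
    (S : Fin n → NonUnitalSubring T) (hS : ∀ i, ∃ r, r ∉ S i) (hcov : ∀ r, ∃ i, r ∈ S i) :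
    coveringNumber R ≤ n := by
  refine coveringNumber_le_of_family (fun i => (S i).comap f) (fun i => ?_) (fun r => hcov (f r))
  obtain ⟨t, ht⟩ := hS i
  obtain ⟨r, rfl⟩ := hf t
  exact ⟨r, ht⟩

/-! ### Upper triangular matrices -/

section UpperTriangular

variable {F : Type} [Field F]

/-- The matrix with rows `(a, b)` and `(0, c)`, as an element of `A(1, F, F)`. -/
def tri (a b c : F) : ↥(AGL 1 (⊤ : Subfield F) ⊤) :=
  ⟨!![a, b; 0, c], fun _ _ => Subfield.mem_top _, fun j => by fin_cases j; rfl,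
    Subfield.mem_top _⟩

lemma tri_add (a b c a' b' c' : F) :
    tri a b c + tri a' b' c' = tri (a + a') (b + b') (c + c') := by
  apply Subtype.ext
  ext i j
  fin_cases i <;> fin_cases j <;> simp [tri]

lemma tri_mul (a b c a' b' c' : F) :
    tri a b c * tri a' b' c' = tri (a * a') (a * b' + b * c') (c * c') := by
  apply Subtype.ext
  ext i j
  fin_cases i <;> fin_cases j <;> simp [tri, Matrix.mul_apply, Fin.sum_univ_two]

lemma exists_tri (M : ↥(AGL 1 (⊤ : Subfield F) ⊤)) : ∃ a b c : F, M = tri a b c := by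
  obtain ⟨M, h1, h2, h3⟩ := M
  refine ⟨M 0 0, M 0 1, M 1 1, Subtype.ext ?_⟩
  have h := h2 0
  ext i j
  fin_cases i <;> fin_cases j <;> first | rfl | exact h

/-- The diagonal of an upper triangular matrix; its kernel is the Jacobson radical. -/
def diagHom : ↥(AGL 1 (⊤ : Subfield F) ⊤) →+* F × F where
  toFun M := (M.1 0 0, M.1 1 1)
  map_zero' := rfl
  map_one' := by simp
  map_add' _ _ := rfl
  map_mul' M N := by
    obtain ⟨a, b, c, rfl⟩ := exists_tri M
    obtain ⟨a', b', c', rfl⟩ := exists_tri N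
    rw [tri_mul]
    rfl

lemma diagHom_surjective : Function.Surjective (diagHom (F := F)) :=
  fun p => ⟨tri p.1 0 p.2, rfl⟩

/-- A cover of `F × F` by `n` proper subrings bounds the covering numbers of both the triangular
ring and its quotient by the radical; if the former number is `n`, the ring is therefore not
σ-elementary. -/
lemma eq_and_not_isSigmaElementary {n : ℕ} (S : Fin n → NonUnitalSubring (F × F))
    (hS : ∀ i, ∃ r, r ∉ S i) (hcov : ∀ r, ∃ i, r ∈ S i)
    (x : Fin n → ↥(AGL 1 (⊤ : Subfield F) ⊤))
    (hx : ∀ i j, i < j → ∀ S : NonUnitalSubring ↥(AGL 1 (⊤ : Subfield F) ⊤),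
      x i ∈ S → x j ∈ S → S = ⊤) :
    coveringNumber ↥(AGL 1 (⊤ : Subfield F) ⊤) = n ∧
      ¬ IsSigmaElementary ↥(AGL 1 (⊤ : Subfield F) ⊤) := by
  have hlow := le_coveringNumber_of_generate x hx
  refine ⟨le_antisymm (coveringNumber_le_of_surjective
    (diagHom (F := F)).toNonUnitalRingHom diagHom_surjective S hS hcov) hlow, fun hel => ?_⟩
  have hle : (TwoSidedIdeal.ker (diagHom (F := F))).ringCon ≤ RingCon.ker diagHom :=
    fun _ _ h => h
  have hker : TwoSidedIdeal.ker (diagHom (F := F)) ≠ ⊥ := by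
    intro h
    have h0 : tri (0 : F) 1 0 = tri 0 0 0 := TwoSidedIdeal.ker_eq_bot _ |>.1 h rfl
    have h1 := congrArg (fun M => M.1 0 1) h0
    simp [tri] at h1
  have hq := coveringNumber_le_of_surjective
    (RingCon.lift _ diagHom hle).toNonUnitalRingHom
    (RingCon.lift_surjective_of_surjective hle diagHom_surjective) S hS hcov
  exact absurd (hel _ hker) (not_lt.2 (hq.trans hlow))

variable {S : NonUnitalSubring ↥(AGL 1 (⊤ : Subfield F) ⊤)}

lemma tri_mul_mem {a b c a' b' c' : F} (h : tri a b c ∈ S) (h' : tri a' b' c' ∈ S) :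
    tri (a * a') (a * b' + b * c') (c * c') ∈ S :=
  tri_mul a b c a' b' c' ▸ S.mul_mem h h'

lemma tri_add_mem {a b c a' b' c' : F} (h : tri a b c ∈ S) (h' : tri a' b' c' ∈ S) :
    tri (a + a') (b + b') (c + c') ∈ S :=
  tri_add a b c a' b' c' ▸ S.add_mem h h'

lemma tri_zero_mem : tri (0 : F) 0 0 ∈ S := by
  have h : tri (0 : F) 0 0 = 0 := by
    apply Subtype.ext
    ext i j
    fin_cases i <;> fin_cases j <;> rfl
  exact h ▸ S.zero_mem

/-- Rewriting the entries of a matrix in `S`. -/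
lemma tri_mem_of_eq {a b c a' b' c' : F} (h : tri a b c ∈ S) (ha : a = a') (hb : b = b')
    (hc : c = c') : tri a' b' c' ∈ S := by
  subst ha hb hc
  exact h

/-! ### The field with two elements -/

lemma eq_top_of_F2 (hF : ∀ a : F, a = 0 ∨ a = 1) (h1 : tri (1 : F) 0 0 ∈ S)
    (h2 : tri (0 : F) 1 0 ∈ S) (h3 : tri (0 : F) 0 1 ∈ S) : S = ⊤ := by
  refine eq_top_iff.2 fun M _ => ?_
  obtain ⟨a, b, c, rfl⟩ := exists_tri M
  have h0 : tri (0 : F) 0 0 ∈ S := tri_zero_mem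
  have ha : tri a 0 0 ∈ S := by rcases hF a with rfl | rfl <;> assumption
  have hb : tri 0 b 0 ∈ S := by rcases hF b with rfl | rfl <;> assumption
  have hc : tri 0 0 c ∈ S := by rcases hF c with rfl | rfl <;> assumption
  exact tri_mem_of_eq (tri_add_mem (tri_add_mem ha hb) hc) (by simp) (by simp) (by simp)

lemma F2_result [Fintype F] (hcard : Fintype.card F = 2) :
    coveringNumber ↥(AGL 1 (⊤ : Subfield F) ⊤) = 3 ∧
      ¬ IsSigmaElementary ↥(AGL 1 (⊤ : Subfield F) ⊤) := by
  have h2 : (2 : F) = 0 := by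
    have := Nat.cast_card_eq_zero F
    rwa [hcard] at this
  have hF : ∀ a : F, a = 0 ∨ a = 1 := by
    intro a
    have := FiniteField.pow_card a
    rw [hcard] at this
    grind
  refine eq_and_not_isSigmaElementary (n := 3)
    ![NonUnitalRingHom.eqLocus (NonUnitalRingHom.fst F F) 0,
      NonUnitalRingHom.eqLocus (NonUnitalRingHom.snd F F) 0,
      NonUnitalRingHom.eqLocus (NonUnitalRingHom.fst F F) (NonUnitalRingHom.snd F F)] ?_ ?_
    ![tri 1 0 0, tri 0 1 1, tri 1 1 1] ?_
  · intro i
    fin_cases i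
    · exact ⟨(1, 0), fun h => one_ne_zero (α := F) h⟩
    · exact ⟨(0, 1), fun h => one_ne_zero (α := F) h⟩
    · exact ⟨(1, 0), fun h => one_ne_zero (α := F) h⟩
  · rintro ⟨a, b⟩
    rcases hF a with ha | ha
    · exact ⟨0, ha⟩
    · rcases hF b with hb | hb
      · exact ⟨1, hb⟩
      · exact ⟨2, ha.trans hb.symm⟩
  · intro i j hij S hi hj
    fin_cases i <;> fin_cases j <;> simp at hij <;> simp at hi hj
    · have hn := tri_mul_mem hi hj
      refine eq_top_of_F2 hF hi (tri_mem_of_eq hn ?_ ?_ ?_)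
        (tri_mem_of_eq (tri_add_mem hj hn) ?_ ?_ ?_) <;> grind
    · have hn := tri_add_mem (tri_mul_mem hi hj) hi
      refine eq_top_of_F2 hF hi (tri_mem_of_eq hn ?_ ?_ ?_)
        (tri_mem_of_eq (tri_add_mem (tri_add_mem hj hi) hn) ?_ ?_ ?_) <;> grind
    · have he := tri_add_mem hi hj
      have hn := tri_mul_mem he hi
      refine eq_top_of_F2 hF (tri_mem_of_eq he ?_ ?_ ?_) (tri_mem_of_eq hn ?_ ?_ ?_)
        (tri_mem_of_eq (tri_add_mem hi hn) ?_ ?_ ?_) <;> grind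

/-! ### The field with four elements -/

/-- Over `F₄`, with `w` a generator of the field, `tri w s 0` multiplies the radical by `w`, so
that a nonzero radical element gives the whole radical; this removes the corner entries `s`, `t`,
and the powers of `w` span the field. -/
lemma eq_top_of_F4 {w b s t : F} (h2 : (2 : F) = 0) (hw : w ^ 2 = w + 1)
    (hF : ∀ a : F, a = 0 ∨ a = 1 ∨ a = w ∨ a = w + 1) (hb : b ≠ 0)
    (h1 : tri w s 0 ∈ S) (hn : tri 0 b 0 ∈ S) (h3 : tri 0 t w ∈ S) : S = ⊤ := by
  have h0 : tri (0 : F) 0 0 ∈ S := tri_zero_mem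
  have hwb := tri_mul_mem h1 hn
  have hwwb := tri_mul_mem h1 hwb
  have hrad : ∀ z : F, tri 0 z 0 ∈ S := by
    intro z
    -- `z` is the multiple of `b` by one of the four elements of the field
    have hz : z = z / b * b := (div_mul_cancel₀ z hb).symm
    generalize z / b = y at hz
    subst hz
    rcases hF y with rfl | rfl | rfl | rfl
    · exact tri_mem_of_eq h0 rfl (by ring) rfl
    · exact tri_mem_of_eq hn rfl (by ring) rfl
    · exact tri_mem_of_eq hwb (by ring) (by ring) (by ring)
    · exact tri_mem_of_eq hwwb (by ring) (by grind) (by ring)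
  have hu : tri w 0 0 ∈ S :=
    tri_mem_of_eq (tri_add_mem h1 (hrad s)) (by ring) (by grind) (by ring)
  have hv : tri 0 0 w ∈ S :=
    tri_mem_of_eq (tri_add_mem h3 (hrad t)) (by ring) (by grind) (by ring)
  have hu2 := tri_mul_mem hu hu
  have hv2 := tri_mul_mem hv hv
  refine eq_top_iff.2 fun M _ => ?_
  obtain ⟨x, y, z, rfl⟩ := exists_tri M
  have hx : tri x 0 0 ∈ S := by
    rcases hF x with rfl | rfl | rfl | rfl
    · exact h0
    · exact tri_mem_of_eq (tri_add_mem hu hu2) (by grind) (by ring) (by ring)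
    · exact hu
    · exact tri_mem_of_eq hu2 (by grind) (by ring) (by ring)
  have hz : tri 0 0 z ∈ S := by
    rcases hF z with rfl | rfl | rfl | rfl
    · exact h0
    · exact tri_mem_of_eq (tri_add_mem hv hv2) (by ring) (by ring) (by grind)
    · exact hv
    · exact tri_mem_of_eq hv2 (by ring) (by ring) (by grind)
  exact tri_mem_of_eq (tri_add_mem (tri_add_mem hx (hrad y)) hz) (by ring) (by ring) (by ring)

/-- Four matrices over `F₄` any two of which generate the triangular ring. Their diagonals lie in
four different maximal subrings of `F₄ × F₄`, and no two of them lie in a common complement of the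
radical. -/
lemma generate_F4 {w : F} (h2 : (2 : F) = 0) (hw : w ^ 2 = w + 1)
    (hF : ∀ a : F, a = 0 ∨ a = 1 ∨ a = w ∨ a = w + 1) (i j : Fin 4) (hij : i < j)
    (S : NonUnitalSubring ↥(AGL 1 (⊤ : Subfield F) ⊤))
    (hi : (![tri w 0 1, tri 1 1 w, tri w 1 w, tri w 1 (w + 1)] : Fin 4 → _) i ∈ S)
    (hj : (![tri w 0 1, tri 1 1 w, tri w 1 w, tri w 1 (w + 1)] : Fin 4 → _) j ∈ S) :
    S = ⊤ := by
  have h1 : (1 : F) ≠ 0 := one_ne_zero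
  -- the first matrix generates the diagonal idempotents
  have hfirst : tri w 0 1 ∈ S → tri w 0 0 ∈ S ∧ tri 1 0 0 ∈ S ∧ tri 0 0 1 ∈ S := by
    intro h
    have hsq := tri_mul_mem h h
    have h3 := tri_mul_mem hsq h
    have hd := tri_add_mem hsq h
    have hww := tri_add_mem h h3
    have hu : tri w 0 0 ∈ S := by
      refine tri_mem_of_eq (tri_mul_mem hww hww) ?_ ?_ ?_ <;> grind
    refine ⟨hu, ?_, ?_⟩
    · refine tri_mem_of_eq hd ?_ ?_ ?_ <;> grind
    · refine tri_mem_of_eq (tri_add_mem h hu) ?_ ?_ ?_ <;> grind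
  -- the second matrix generates the conjugate idempotents
  have hsecond : tri 1 1 w ∈ S → tri 1 w 0 ∈ S ∧ tri 0 w 1 ∈ S ∧ tri 0 (w + 1) w ∈ S := by
    intro h
    have hsq := tri_mul_mem h h
    have h3 := tri_mul_mem hsq h
    have hg := tri_add_mem h3 h
    have hg2 := tri_mul_mem hg hg
    have hg3 := tri_mul_mem hg2 hg
    refine ⟨?_, ?_, ?_⟩
    · refine tri_mem_of_eq (tri_add_mem h3 hg3) ?_ ?_ ?_ <;> grind
    · refine tri_mem_of_eq hg3 ?_ ?_ ?_ <;> grind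
    · refine tri_mem_of_eq hg2 ?_ ?_ ?_ <;> grind
  fin_cases i <;> fin_cases j <;> simp at hij <;> simp at hi hj
  · obtain ⟨hu, he, hf⟩ := hfirst hi
    refine eq_top_of_F4 (b := 1) (t := 0) h2 hw hF h1 hu
      (tri_mem_of_eq (tri_mul_mem (tri_mul_mem he hj) hf) ?_ ?_ ?_)
      (tri_mem_of_eq (tri_mul_mem hf hj) ?_ ?_ ?_) <;> grind
  · obtain ⟨hu, he, hf⟩ := hfirst hi
    refine eq_top_of_F4 (b := 1) (t := 0) h2 hw hF h1 hu
      (tri_mem_of_eq (tri_mul_mem (tri_mul_mem he hj) hf) ?_ ?_ ?_)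
      (tri_mem_of_eq (tri_mul_mem hf hj) ?_ ?_ ?_) <;> grind
  · obtain ⟨hu, he, hf⟩ := hfirst hi
    have hv := tri_mul_mem hf hj
    refine eq_top_of_F4 (b := 1) (t := 0) h2 hw hF h1 hu
      (tri_mem_of_eq (tri_mul_mem (tri_mul_mem he hj) hf) ?_ ?_ ?_)
      (tri_mem_of_eq (tri_mul_mem hv hv) ?_ ?_ ?_) <;> grind
  · obtain ⟨he, hf, hv⟩ := hsecond hi
    refine eq_top_of_F4 (b := 1) (s := w + 1) h2 hw hF h1
      (tri_mem_of_eq (tri_mul_mem (tri_mul_mem he hj) he) ?_ ?_ ?_)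
      (tri_mem_of_eq (tri_mul_mem (tri_mul_mem he hj) hf) ?_ ?_ ?_) hv <;> grind
  · obtain ⟨he, hf, hv⟩ := hsecond hi
    refine eq_top_of_F4 (b := w + 1) (s := w + 1) h2 hw hF (by grind)
      (tri_mem_of_eq (tri_mul_mem (tri_mul_mem he hj) he) ?_ ?_ ?_)
      (tri_mem_of_eq (tri_mul_mem (tri_mul_mem he hj) hf) ?_ ?_ ?_) hv <;> grind
  · have hf : tri 0 0 1 ∈ S := by
      refine tri_mem_of_eq (tri_add_mem hi hj) ?_ ?_ ?_ <;> grind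
    have hv := tri_mul_mem hi hf
    have hsq := tri_mul_mem hi hi
    have h4 := tri_mul_mem hsq hsq
    refine eq_top_of_F4 (b := 1) (s := 0) (t := 1) h2 hw hF h1
      (tri_mem_of_eq (tri_add_mem hi hv) ?_ ?_ ?_)
      (tri_mem_of_eq (tri_add_mem hi h4) ?_ ?_ ?_) (tri_mem_of_eq hv ?_ ?_ ?_) <;> grind

lemma F4_result [Fintype F] (hcard : Fintype.card F = 4) :
    coveringNumber ↥(AGL 1 (⊤ : Subfield F) ⊤) = 4 ∧
      ¬ IsSigmaElementary ↥(AGL 1 (⊤ : Subfield F) ⊤) := by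
  have h2 : (2 : F) = 0 := by
    have h4 := Nat.cast_card_eq_zero F
    rw [hcard] at h4
    have : (2 : F) ^ 2 = 0 := by push_cast at h4; linear_combination h4
    exact pow_eq_zero_iff two_ne_zero |>.1 this
  have : CharP F 2 := CharTwo.of_one_ne_zero_of_two_eq_zero one_ne_zero h2
  obtain ⟨w, hw0⟩ : ∃ w : F, w ∉ ({0, 1} : Finset F) := by
    by_contra! h
    have := Finset.card_le_card (show (Finset.univ : Finset F) ⊆ {0, 1} from fun a _ => h a)
    rw [Finset.card_univ, hcard] at this
    exact absurd (this.trans Finset.card_le_two) (by norm_num)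
  simp only [Finset.mem_insert, Finset.mem_singleton, not_or] at hw0
  have hpow : ∀ a : F, a = 0 ∨ a = 1 ∨ a ^ 2 = a + 1 := by
    intro a
    have h := FiniteField.pow_card a
    rw [hcard] at h
    have h' : a * ((a - 1) * (a ^ 2 + a + 1)) = 0 := by linear_combination h
    rcases mul_eq_zero.1 h' with h' | h'
    · exact Or.inl h'
    · rcases mul_eq_zero.1 h' with h' | h'
      · exact Or.inr (Or.inl (sub_eq_zero.1 h'))
      · exact Or.inr (Or.inr (by linear_combination h' - (a + 1) * h2))
  have hroot : ∀ a b : F, a ^ 2 = a + 1 → b ^ 2 = b + 1 → b = a ∨ b = a + 1 := by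
    intro a b ha hb
    have h : (b - a) * (b - (a + 1)) = 0 := by
      linear_combination hb + ha - a * b * h2 + (a + 1) * h2
    exact (mul_eq_zero.1 h).imp sub_eq_zero.1 sub_eq_zero.1
  have hw : w ^ 2 = w + 1 := by
    rcases hpow w with h | h | h
    · exact absurd h hw0.1
    · exact absurd h hw0.2
    · exact h
  have hww : w ^ 2 ≠ w := by grind
  have hF : ∀ a : F, a = 0 ∨ a = 1 ∨ a = w ∨ a = w + 1 := by
    intro a
    rcases hpow a with h | h | h
    · exact Or.inl h
    · exact Or.inr (Or.inl h)
    · exact Or.inr (Or.inr (hroot w a hw h))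
  let φ := frobenius F 2
  refine eq_and_not_isSigmaElementary (n := 4)
    ![(RingHom.eqLocus (φ.comp (RingHom.fst F F)) (RingHom.fst F F)).toNonUnitalSubring,
      (RingHom.eqLocus (φ.comp (RingHom.snd F F)) (RingHom.snd F F)).toNonUnitalSubring,
      (RingHom.eqLocus (RingHom.fst F F) (RingHom.snd F F)).toNonUnitalSubring,
      (RingHom.eqLocus (φ.comp (RingHom.fst F F)) (RingHom.snd F F)).toNonUnitalSubring] ?_ ?_
    ![tri w 0 1, tri 1 1 w, tri w 1 w, tri w 1 (w + 1)] (generate_F4 h2 hw hF)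
  · intro i
    fin_cases i
    · exact ⟨(w, 0), fun h => hww h⟩
    · exact ⟨(0, w), fun h => hww h⟩
    · exact ⟨(1, 0), fun h => one_ne_zero (α := F) h⟩
    · exact ⟨(w, w), fun h => hww h⟩
  · rintro ⟨a, b⟩
    have hfix : ∀ a : F, a ^ 2 = a ∨ a ^ 2 = a + 1 := by
      intro a
      rcases hpow a with rfl | rfl | h
      · exact Or.inl (by ring)
      · exact Or.inl (by ring)
      · exact Or.inr h
    rcases hfix a with ha | ha
    · exact ⟨0, ha⟩
    · rcases hfix b with hb | hb
      · exact ⟨1, hb⟩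
      · rcases hroot a b ha hb with h | h
        · exact ⟨2, h.symm⟩
        · exact ⟨3, ha.trans h.symm⟩

end UpperTriangular

/-- `σ(A(1,2,2)) = 3`, `σ(A(1,4,4)) = 4`, and neither ring (the 2×2 upper
triangular matrices over `F_2` resp. `F_4`) is σ-elementary. -/
theorem coveringNumber_upperTriangular_F2_F4 :
    (∀ (F : Type) [Field F] [Fintype F], Fintype.card F = 2 →
      coveringNumber ↥(AGL 1 (⊤ : Subfield F) ⊤) = 3 ∧
        ¬ IsSigmaElementary ↥(AGL 1 (⊤ : Subfield F) ⊤)) ∧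
    (∀ (F : Type) [Field F] [Fintype F], Fintype.card F = 4 →
      coveringNumber ↥(AGL 1 (⊤ : Subfield F) ⊤) = 4 ∧
        ¬ IsSigmaElementary ↥(AGL 1 (⊤ : Subfield F) ⊤)) := by
  exact ⟨fun _ _ _ h => F2_result h, fun _ _ _ h => F4_result h⟩
end
end

section
/- Let R = A(n,q1,q2) with n ≥ 1, let J be its Jacobson radical, and let S = S1 ⊕ S2 be the standard semisimple complement to J. Then J ∩ Z(R) = {0}, where Z(R) is the center of R; moreover, for x, y ∈ J, the conjugates satisfy S^{1+x} = S^{1+y} if and only if x = y, so the number of distinct conjugates S^{1+x} with x ∈ J equals |J| = q^n, where q = q1 ⊗ q2. -/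
/-!
Let `e ∈ S` be the block idempotent `diag(1, …, 1, 0)`. For `x ∈ J` one has `e x = x` and `x e = 0`
(`blockIdem_mul`, `mul_blockIdem`). A central `x ∈ J` therefore satisfies `x = e x = x e = 0`.

The conjugate of `e` by `1 + x` is `e + x`. If it lies in `S^{1+y}`, say `e + x = s + (s y - y s)` with
`s ∈ S`, then `s - e` belongs to `S` and, `J` being an ideal, also to `J`. As `S ∩ J = 0`, this forces
`s = e`, hence `e + x = e + y`. So `x ↦ S^{1+x}` is injective on `J`, and the number of conjugates is
`|J|`, which is `|F| ^ n` since an element of `J` is an arbitrary column in `F ^ n`.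
-/


open scoped Classical

noncomputable section

/-- The Jacobson radical `J` of `A(n,F1,F2)`: matrices supported on the top-right column. -/
def AGLJ (n : ℕ) {F : Type*} [Field F] (F1 F2 : Subfield F) : Set ↥(AGL n F1 F2) :=
  {x | ∀ i j : Fin (n + 1), (j ≠ Fin.last n ∨ i = Fin.last n) → x.val i j = 0}

/-- The standard semisimple complement `S = S1 ⊕ S2` of `J` in `A(n,F1,F2)`:
block-diagonal matrices (top-right column zero). -/
def AGLS (n : ℕ) {F : Type*} [Field F] (F1 F2 : Subfield F) : Set ↥(AGL n F1 F2) :=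
  {x | ∀ i : Fin n, x.val i.castSucc (Fin.last n) = 0}

section AGLLemmas

variable {n : ℕ} {F : Type*} [Field F] {F1 F2 : Subfield F}

/-- The block idempotent `diag(1, …, 1, 0)`, that is, the identity of `S1`. -/
def blockIdem (n : ℕ) {F : Type*} [Field F] (F1 F2 : Subfield F) : ↥(AGL n F1 F2) :=
  ⟨Matrix.diagonal (fun i => if i = Fin.last n then 0 else 1), by
    refine ⟨fun i j => ?_, fun j => ?_, ?_⟩
    · by_cases h : i = j
      · subst h
        simp [Fin.castSucc_ne_last, one_mem]
      · simp [h, zero_mem]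
    · exact Matrix.diagonal_apply_ne _ (Fin.castSucc_lt_last j).ne'
    · simp [zero_mem]⟩

lemma blockIdem_mem_S : blockIdem n F1 F2 ∈ AGLS n F1 F2 := fun i =>
  Matrix.diagonal_apply_ne _ (Fin.castSucc_lt_last i).ne

lemma blockIdem_mul {x : ↥(AGL n F1 F2)} (hx : x ∈ AGLJ n F1 F2) : blockIdem n F1 F2 * x = x := by
  ext i j
  change ((Matrix.diagonal (fun i => if i = Fin.last n then 0 else 1) : Matrix _ _ F) * x.val) i j = x.val i j
  rw [Matrix.diagonal_mul]
  split_ifs with h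
  · rw [hx i j (Or.inr h), mul_zero]
  · rw [one_mul]

lemma mul_blockIdem {x : ↥(AGL n F1 F2)} (hx : x ∈ AGLJ n F1 F2) : x * blockIdem n F1 F2 = 0 := by
  ext i j
  change (x.val * (Matrix.diagonal (fun i => if i = Fin.last n then 0 else 1) : Matrix _ _ F)) i j = 0
  rw [Matrix.mul_diagonal]
  split_ifs with h
  · rw [mul_zero]
  · rw [hx i j (Or.inl h), zero_mul]

lemma sub_mem_J {x y : ↥(AGL n F1 F2)} (hx : x ∈ AGLJ n F1 F2) (hy : y ∈ AGLJ n F1 F2) :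
    x - y ∈ AGLJ n F1 F2 := by
  intro i j h
  change x.val i j - y.val i j = 0
  rw [hx i j h, hy i j h, sub_zero]

lemma mul_mem_J_left (s : ↥(AGL n F1 F2)) {y : ↥(AGL n F1 F2)} (hy : y ∈ AGLJ n F1 F2) :
    s * y ∈ AGLJ n F1 F2 := by
  intro i j h
  change (s.val * y.val) i j = 0
  rw [Matrix.mul_apply]
  refine Finset.sum_eq_zero fun k _ => ?_
  rcases h with h | rfl
  · rw [hy k j (Or.inl h), mul_zero]
  · induction k using Fin.lastCases with
    | last => rw [hy _ j (Or.inr rfl), mul_zero]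
    | cast k => rw [s.2.2.1 k, zero_mul]

lemma mul_mem_J_right (s : ↥(AGL n F1 F2)) {y : ↥(AGL n F1 F2)} (hy : y ∈ AGLJ n F1 F2) :
    y * s ∈ AGLJ n F1 F2 := by
  intro i j h
  change (y.val * s.val) i j = 0
  rw [Matrix.mul_apply]
  refine Finset.sum_eq_zero fun k _ => ?_
  rcases h with h | rfl
  · induction k using Fin.lastCases with
    | last =>
      obtain ⟨j, rfl⟩ := Fin.exists_castSucc_eq.2 h
      rw [s.2.2.1 j, mul_zero]
    | cast k => rw [hy i _ (Or.inl (Fin.castSucc_ne_last k)), zero_mul]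
  · rw [hy _ k (Or.inr rfl), zero_mul]

lemma eq_zero_of_mem_J_of_mem_S {x : ↥(AGL n F1 F2)} (hx : x ∈ AGLJ n F1 F2)
    (hxS : x ∈ AGLS n F1 F2) : x = 0 := by
  ext i j
  change x.val i j = 0
  by_cases h : j ≠ Fin.last n ∨ i = Fin.last n
  · exact hx i j h
  · push Not at h
    obtain ⟨i, rfl⟩ := Fin.exists_castSucc_eq.2 h.2
    rw [h.1]
    exact hxS i

/-- Injectivity of `x ↦ S^{1+x}`: the conjugate `e + x` of the block idempotent `e` lies in
`S^{1+y}` only for `x = y`. -/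
lemma eq_of_conj_eq {x y : ↥(AGL n F1 F2)} (hx : x ∈ AGLJ n F1 F2) (hy : y ∈ AGLJ n F1 F2)
    (h : (fun s => s + s * x - x * s) '' AGLS n F1 F2
      = (fun s => s + s * y - y * s) '' AGLS n F1 F2) : x = y := by
  have hmem := h ▸ Set.mem_image_of_mem (fun s => s + s * x - x * s)
    (blockIdem_mem_S (n := n) (F1 := F1) (F2 := F2))
  obtain ⟨s, hs, hse⟩ := hmem
  simp only [blockIdem_mul hx, mul_blockIdem hx, sub_zero] at hse
  have hJ : s - blockIdem n F1 F2 ∈ AGLJ n F1 F2 := by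
    have : s - blockIdem n F1 F2 = x - (s * y - y * s) := by
      rw [sub_eq_sub_iff_add_eq_add, add_comm x, ← hse]
      abel
    rw [this]
    exact sub_mem_J hx (sub_mem_J (mul_mem_J_left s hy) (mul_mem_J_right s hy))
  have hS : s - blockIdem n F1 F2 ∈ AGLS n F1 F2 := fun i => by
    change s.val _ _ - (blockIdem n F1 F2).val _ _ = 0
    rw [hs i, blockIdem_mem_S i, sub_zero]
  have hs_eq := sub_eq_zero.1 (eq_zero_of_mem_J_of_mem_S hJ hS)
  rw [hs_eq, blockIdem_mul hy, mul_blockIdem hy, sub_zero] at hse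
  exact (add_left_cancel hse).symm

/-- An element of `J` amounts to an arbitrary top-right column. -/
def equivJ (n : ℕ) {F : Type*} [Field F] (F1 F2 : Subfield F) :
    ↥(AGLJ n F1 F2) ≃ (Fin n → F) where
  toFun x i := x.val.val i.castSucc (Fin.last n)
  invFun v := ⟨⟨fun i j => if j = Fin.last n then Fin.lastCases (motive := fun _ => F) 0 v i else 0,
      fun i j => by simp [Fin.castSucc_ne_last, zero_mem],
      fun j => by simp,
      by simp [zero_mem]⟩,
    fun i j h => by
      rcases h with h | rfl
      · exact if_neg h
      · simp⟩
  left_inv x := by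
    ext i j
    by_cases hj : j = Fin.last n
    · subst hj
      induction i using Fin.lastCases with
      | last => simp [x.2 _ _ (Or.inr rfl)]
      | cast i => simp
    · simp [hj, x.2 i j (Or.inl hj)]
  right_inv v := by
    ext i
    simp

end AGLLemmas

/-- Lemma 3.1: `J ∩ Z(R) = {0}`, the conjugates `S^{1+x}`, `x ∈ J`, are
pairwise distinct, and hence their number is `|J| = q^n`. -/
theorem AGL_J_inter_center_eq_bot
    (p d1 d2 n : ℕ) (hp : p.Prime) (hd1 : 1 ≤ d1) (hd2 : 1 ≤ d2) (hn : 1 ≤ n)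
    (F : Type) [Field F] [Fintype F] (F1 F2 : Subfield F)
    (hF1 : Nat.card F1 = p ^ d1) (hF2 : Nat.card F2 = p ^ d2)
    (hF : Nat.card F = p ^ Nat.lcm d1 d2) (hcomp : F1 ⊔ F2 = ⊤) :
    (AGLJ n F1 F2 ∩ Set.center ↥(AGL n F1 F2)) = {0} ∧
    (∀ x ∈ AGLJ n F1 F2, ∀ y ∈ AGLJ n F1 F2,
      ((fun s => s + s * x - x * s) '' AGLS n F1 F2
          = (fun s => s + s * y - y * s) '' AGLS n F1 F2) ↔ x = y) ∧
    Set.ncard {T : Set ↥(AGL n F1 F2) |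
        ∃ x ∈ AGLJ n F1 F2, T = (fun s => s + s * x - x * s) '' AGLS n F1 F2}
      = Nat.card (AGLJ n F1 F2) ∧
    Nat.card (AGLJ n F1 F2) = (p ^ Nat.lcm d1 d2) ^ n := by
  refine ⟨?_, fun x hx y hy => ⟨eq_of_conj_eq hx hy, fun h => h ▸ rfl⟩, ?_, ?_⟩
  · refine Set.eq_singleton_iff_unique_mem.2 ⟨⟨fun _ _ _ => rfl, Set.zero_mem_center⟩, ?_⟩
    rintro x ⟨hx, hc⟩
    rw [← blockIdem_mul hx, ← mul_blockIdem hx]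
    exact Semigroup.mem_center_iff.1 hc _
  · have himage : {T : Set ↥(AGL n F1 F2) |
        ∃ x ∈ AGLJ n F1 F2, T = (fun s => s + s * x - x * s) '' AGLS n F1 F2}
        = (fun x => (fun s => s + s * x - x * s) '' AGLS n F1 F2) '' AGLJ n F1 F2 := by
      ext T
      simp only [Set.mem_ofPred_eq, Set.mem_image, eq_comm]
    rw [himage, Set.InjOn.ncard_image fun x hx y hy h => eq_of_conj_eq hx hy h,
      Nat.card_coe_set_eq]
  · rw [Nat.card_congr (equivJ n F1 F2), Nat.card_fun, hF, Nat.card_fin]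
end
end

section
/- Let R = A(n,q1,q2) with n ≥ 1, let J be its Jacobson radical, and let S = S1 ⊕ S2 be the standard semisimple complement to J. Let ℳ be any collection of proper subrings of S such that the union ∪_{x ∈ J, x ≠ 0} C_S(x) of centralizers is contained in ∪_{M ∈ ℳ} M. Then the collection {S^{1+x} : x ∈ J} ∪ {M ⊕ J : M ∈ ℳ} is a cover of R: all of its members are proper subrings of R and their union is all of R. -/
/-!
Write an element of `R` as `r = s + v` with `s ∈ S` and `v ∈ J`. The map `x ↦ s x - x s` is an
additive endomorphism of the finite group `J` (`exists_centralized_or_surj`). If it is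
surjective, then `v = s x - x s` for some `x ∈ J`, so `r ∈ S^{1+x}`. Otherwise it is not
injective, so `s` centralizes a nonzero element of `J`; hence `s` lies in some `M ∈ ℳ` and
`r ∈ M + J`.

Since `J` is an ideal with `J² = 0`, both `S^{1+x}` and `M + J` are subrings. Both are proper
because `S ∩ J = 0`: the former meets `J` trivially while `J ≠ 0` (here `n ≥ 1` is needed), and
the latter meets `S` exactly in `M`.
-/

open scoped Classical

noncomputable section

section

variable {n : ℕ} {F : Type*} [Field F] {F1 F2 : Subfield F}

/-! ### Block arithmetic -/

lemma AGL_val_zero (x : AGL n F1 F2) (j : Fin n) :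
    x.val (Fin.last n) j.castSucc = 0 := x.property.2.1 j

/-- The bottom-left block vanishes throughout the ring, so membership in `J` only constrains
the two diagonal blocks. -/
lemma mem_AGLJ_iff {x : AGL n F1 F2} : x ∈ AGLJ n F1 F2 ↔
    (∀ i j : Fin n, x.val i.castSucc j.castSucc = 0) ∧ x.val (Fin.last n) (Fin.last n) = 0 := by
  constructor
  · intro h
    exact ⟨fun i j => h _ _ (Or.inl (Fin.castSucc_lt_last j).ne), h _ _ (Or.inr rfl)⟩
  · rintro ⟨h1, h2⟩ i j hij
    induction i using Fin.lastCases with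
    | last =>
      induction j using Fin.lastCases with
      | last => exact h2
      | cast j => exact AGL_val_zero x j
    | cast i =>
      induction j using Fin.lastCases with
      | last => exact (hij.elim (fun h => h rfl) fun h => (Fin.castSucc_lt_last i).ne h).elim
      | cast j => exact h1 i j

lemma mul_topLeft (x y : AGL n F1 F2) (i j : Fin n) :
    (x * y).val i.castSucc j.castSucc =
      ∑ k : Fin n, x.val i.castSucc k.castSucc * y.val k.castSucc j.castSucc := by
  change (x.val * y.val) _ _ = _
  rw [Matrix.mul_apply, Fin.sum_univ_castSucc, AGL_val_zero, mul_zero, add_zero]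

lemma mul_topRight (x y : AGL n F1 F2) (i : Fin n) :
    (x * y).val i.castSucc (Fin.last n) =
      ∑ k : Fin n, x.val i.castSucc k.castSucc * y.val k.castSucc (Fin.last n) +
        x.val i.castSucc (Fin.last n) * y.val (Fin.last n) (Fin.last n) := by
  change (x.val * y.val) _ _ = _
  rw [Matrix.mul_apply, Fin.sum_univ_castSucc]

lemma mul_corner (x y : AGL n F1 F2) :
    (x * y).val (Fin.last n) (Fin.last n) =
      x.val (Fin.last n) (Fin.last n) * y.val (Fin.last n) (Fin.last n) := by
  change (x.val * y.val) _ _ = _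
  rw [Matrix.mul_apply, Fin.sum_univ_castSucc]
  simp [AGL_val_zero]

lemma AGL_ext {x y : AGL n F1 F2}
    (h1 : ∀ i j : Fin n, x.val i.castSucc j.castSucc = y.val i.castSucc j.castSucc)
    (h2 : ∀ i : Fin n, x.val i.castSucc (Fin.last n) = y.val i.castSucc (Fin.last n))
    (h3 : x.val (Fin.last n) (Fin.last n) = y.val (Fin.last n) (Fin.last n)) : x = y := by
  apply Subtype.ext
  ext i j
  induction i using Fin.lastCases with
  | last =>
    induction j using Fin.lastCases with
    | last => exact h3
    | cast j => exact (AGL_val_zero x j).trans (AGL_val_zero y j).symm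
  | cast i =>
    induction j using Fin.lastCases with
    | last => exact h2 i
    | cast j => exact h1 i j

/-! ### The decomposition `R = S ⊕ J` -/

variable (n F1 F2) in
/-- `J` as an additive subgroup. -/
def AGLJgrp : AddSubgroup (AGL n F1 F2) where
  carrier := AGLJ n F1 F2
  zero_mem' := fun _ _ _ => rfl
  add_mem' := fun {a b} ha hb i j h => by
    change a.val i j + b.val i j = 0
    rw [ha i j h, hb i j h, add_zero]
  neg_mem' := fun {a} ha i j h => by
    change -a.val i j = 0
    rw [ha i j h, neg_zero]

variable (n F1 F2) in
/-- `S` as a (non-unital) subring. -/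
def AGLSring : NonUnitalSubring (AGL n F1 F2) where
  carrier := AGLS n F1 F2
  zero_mem' := fun _ => rfl
  add_mem' := fun {a b} ha hb i => by
    change a.val _ _ + b.val _ _ = 0
    rw [ha i, hb i, add_zero]
  neg_mem' := fun {a} ha i => by
    change -a.val _ _ = 0
    rw [ha i, neg_zero]
  mul_mem' := fun {a b} ha hb i => by
    rw [mul_topRight, ha i, zero_mul, add_zero]
    exact Finset.sum_eq_zero fun k _ => by rw [hb k, mul_zero]

lemma mul_mem_AGLJ_left (r : AGL n F1 F2) {x : AGL n F1 F2} (hx : x ∈ AGLJgrp n F1 F2) :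
    r * x ∈ AGLJgrp n F1 F2 := by
  obtain ⟨h1, h2⟩ := mem_AGLJ_iff.1 hx
  refine mem_AGLJ_iff.2 ⟨fun i j => ?_, ?_⟩
  · rw [mul_topLeft]
    exact Finset.sum_eq_zero fun k _ => by rw [h1, mul_zero]
  · rw [mul_corner, h2, mul_zero]

lemma mul_mem_AGLJ_right (r : AGL n F1 F2) {x : AGL n F1 F2} (hx : x ∈ AGLJgrp n F1 F2) :
    x * r ∈ AGLJgrp n F1 F2 := by
  obtain ⟨h1, h2⟩ := mem_AGLJ_iff.1 hx
  refine mem_AGLJ_iff.2 ⟨fun i j => ?_, ?_⟩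
  · rw [mul_topLeft]
    exact Finset.sum_eq_zero fun k _ => by rw [h1, zero_mul]
  · rw [mul_corner, h2, zero_mul]

lemma AGLJ_mul_AGLJ {x y : AGL n F1 F2} (hx : x ∈ AGLJgrp n F1 F2)
    (hy : y ∈ AGLJgrp n F1 F2) : x * y = 0 := by
  obtain ⟨h1, h2⟩ := mem_AGLJ_iff.1 (mul_mem_AGLJ_left x hy)
  refine AGL_ext h1 (fun i => ?_) h2
  rw [mul_topRight, (mem_AGLJ_iff.1 hy).2, mul_zero, add_zero]
  exact Finset.sum_eq_zero fun k _ => by rw [(mem_AGLJ_iff.1 hx).1, zero_mul]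

lemma eq_zero_of_mem_AGLS_of_mem_AGLJ {x : AGL n F1 F2} (hS : x ∈ AGLSring n F1 F2)
    (hJ : x ∈ AGLJgrp n F1 F2) : x = 0 :=
  AGL_ext (mem_AGLJ_iff.1 hJ).1 hS (mem_AGLJ_iff.1 hJ).2

/-- The element of `J` with prescribed top-right column. -/
def colJ (v : Fin n → F) : AGL n F1 F2 :=
  ⟨fun i j => Fin.lastCases (motive := fun _ => F)
      (Fin.lastCases (motive := fun _ => F) 0 v i) (fun _ => 0) j, by
    refine ⟨fun i j => ?_, fun j => ?_, ?_⟩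
    · simp
    · simp
    · simp⟩

lemma colJ_topRight (v : Fin n → F) (i : Fin n) :
    (colJ v : AGL n F1 F2).val i.castSucc (Fin.last n) = v i := by
  simp [colJ]

lemma colJ_mem (v : Fin n → F) : (colJ v : AGL n F1 F2) ∈ AGLJgrp n F1 F2 :=
  mem_AGLJ_iff.2 ⟨fun i j => by simp [colJ], by simp [colJ]⟩

/-- The decomposition `R = S + J`. -/
lemma exists_AGLS_add_AGLJ (r : AGL n F1 F2) :
    ∃ s ∈ AGLSring n F1 F2, ∃ v ∈ AGLJgrp n F1 F2, r = s + v := by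
  refine ⟨r - colJ fun i => r.val i.castSucc (Fin.last n), fun i => ?_, _, colJ_mem _,
    (sub_add_cancel _ _).symm⟩
  change r.val _ _ - (colJ _ : AGL n F1 F2).val _ _ = 0
  rw [colJ_topRight, sub_self]

lemma exists_ne_zero_mem_AGLJ (hn : 1 ≤ n) : ∃ y ∈ AGLJgrp n F1 F2, y ≠ 0 := by
  refine ⟨colJ fun _ => 1, colJ_mem _, fun h => ?_⟩
  have h1 := colJ_topRight (F1 := F1) (F2 := F2) (fun _ : Fin n => (1 : F)) ⟨0, hn⟩
  rw [h] at h1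
  exact zero_ne_one h1

/-! ### The subrings `S^{1+x}` and `M + J` -/

lemma comm_mem_AGLJ (s : AGL n F1 F2) {x : AGL n F1 F2} (hx : x ∈ AGLJgrp n F1 F2) :
    s * x - x * s ∈ AGLJgrp n F1 F2 :=
  sub_mem (mul_mem_AGLJ_left s hx) (mul_mem_AGLJ_right s hx)

/-- The conjugate `S^{1+x}`. Closure under multiplication uses `J² = 0`: the commutator with `x`
is a derivation, and the product of two such commutators vanishes. -/
def AGLSconj (x : AGL n F1 F2) (hx : x ∈ AGLJgrp n F1 F2) : NonUnitalSubring (AGL n F1 F2) where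
  carrier := (fun s => s + s * x - x * s) '' AGLS n F1 F2
  zero_mem' := ⟨0, zero_mem (AGLSring n F1 F2), by simp⟩
  add_mem' := by
    rintro _ _ ⟨s, hs, rfl⟩ ⟨t, ht, rfl⟩
    exact ⟨s + t, add_mem (S := NonUnitalSubring _) (s := AGLSring n F1 F2) hs ht, by
      simp only; noncomm_ring⟩
  neg_mem' := by
    rintro _ ⟨s, hs, rfl⟩
    exact ⟨-s, (AGLSring n F1 F2).neg_mem hs, by
      simp only; noncomm_ring⟩
  mul_mem' := by
    rintro _ _ ⟨s, hs, rfl⟩ ⟨t, ht, rfl⟩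
    refine ⟨s * t, mul_mem (S := NonUnitalSubring _) (s := AGLSring n F1 F2) hs ht, ?_⟩
    have h : (s * x - x * s) * (t * x - x * t) = 0 :=
      AGLJ_mul_AGLJ (comm_mem_AGLJ s hx) (comm_mem_AGLJ t hx)
    calc s * t + s * t * x - x * (s * t)
        = s * t + s * t * x - x * (s * t) + (s * x - x * s) * (t * x - x * t) := by
          rw [h, add_zero]
      _ = (s + s * x - x * s) * (t + t * x - x * t) := by noncomm_ring

/-- The subring `M + J`. -/
def addJ (M : NonUnitalSubring (AGL n F1 F2)) : NonUnitalSubring (AGL n F1 F2) where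
  carrier := {r | ∃ m ∈ M, ∃ x ∈ AGLJ n F1 F2, r = m + x}
  zero_mem' := ⟨0, zero_mem M, 0, zero_mem (AGLJgrp n F1 F2), (add_zero _).symm⟩
  add_mem' := by
    rintro _ _ ⟨m, hm, x, hx, rfl⟩ ⟨k, hk, y, hy, rfl⟩
    exact ⟨m + k, add_mem hm hk, x + y, (AGLJgrp n F1 F2).add_mem hx hy, by abel⟩
  neg_mem' := by
    rintro _ ⟨m, hm, x, hx, rfl⟩
    exact ⟨-m, neg_mem hm, -x, (AGLJgrp n F1 F2).neg_mem hx, by abel⟩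
  mul_mem' := by
    rintro _ _ ⟨m, hm, x, hx, rfl⟩ ⟨k, hk, y, hy, rfl⟩
    exact ⟨m * k, mul_mem hm hk, m * y + x * (k + y),
      (AGLJgrp n F1 F2).add_mem (mul_mem_AGLJ_left _ hy) (mul_mem_AGLJ_right _ hx), by
        noncomm_ring⟩

/-- The conjugate `S^{1+x}` meets `J` trivially, whereas `J ≠ 0`. -/
lemma AGLSconj_ne_top (hn : 1 ≤ n) (x : AGL n F1 F2) (hx : x ∈ AGLJgrp n F1 F2) :
    AGLSconj x hx ≠ ⊤ := by
  intro htop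
  obtain ⟨y, hy, hy0⟩ := exists_ne_zero_mem_AGLJ (F1 := F1) (F2 := F2) hn
  have hmem : y ∈ AGLSconj x hx := htop ▸ NonUnitalSubring.mem_top y
  obtain ⟨s, hs, rfl⟩ := hmem
  have hsJ : s ∈ AGLJgrp n F1 F2 := by
    have := sub_mem hy (comm_mem_AGLJ s hx)
    rwa [show s + s * x - x * s - (s * x - x * s) = s by abel] at this
  have hs0 := eq_zero_of_mem_AGLS_of_mem_AGLJ hs hsJ
  exact hy0 (by simp [hs0])

/-- By the uniqueness in `R = S ⊕ J`, an element of `S` lying in `M + J` lies in `M`. -/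
lemma addJ_ne_top (M : NonUnitalSubring (AGL n F1 F2))
    (hle : (M : Set (AGL n F1 F2)) ⊆ AGLS n F1 F2)
    (hne : (M : Set (AGL n F1 F2)) ≠ AGLS n F1 F2) : addJ M ≠ ⊤ := by
  intro htop
  refine hne (hle.antisymm fun s hs => ?_)
  have hmem : s ∈ addJ M := htop ▸ NonUnitalSubring.mem_top s
  obtain ⟨m, hm, x, hx, rfl⟩ := hmem
  have hxS : x ∈ AGLSring n F1 F2 := by
    have := sub_mem (S := NonUnitalSubring _) (H := AGLSring n F1 F2) hs (hle hm)
    rwa [add_sub_cancel_left] at this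
  rw [eq_zero_of_mem_AGLS_of_mem_AGLJ hxS hx, add_zero]
  exact hm

/-! ### Covering -/

/-- The dichotomy behind the cover: the additive endomorphism `x ↦ s x - x s` of the finite
group `J` either has a nonzero kernel element, which `s` then centralizes, or is onto. -/
lemma exists_centralized_or_surj [Finite F] (s : AGL n F1 F2) :
    (∃ x ∈ AGLJ n F1 F2, x ≠ 0 ∧ s * x = x * s) ∨
      ∀ v ∈ AGLJ n F1 F2, ∃ x ∈ AGLJ n F1 F2, s * x - x * s = v := by
  let f : AGLJgrp n F1 F2 →+ AGLJgrp n F1 F2 :=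
    { toFun := fun x => ⟨s * x.1 - x.1 * s, comm_mem_AGLJ s x.2⟩
      map_zero' := by ext1; simp
      map_add' := fun x y => by
        ext1
        change s * (x.1 + y.1) - (x.1 + y.1) * s = s * x.1 - x.1 * s + (s * y.1 - y.1 * s)
        noncomm_ring }
  by_cases hf : Function.Injective f
  · right
    intro v hv
    obtain ⟨x, hx⟩ := Finite.surjective_of_injective hf ⟨v, hv⟩
    exact ⟨x.1, x.2, congrArg Subtype.val hx⟩
  · left
    rw [injective_iff_map_eq_zero] at hf
    push Not at hf
    obtain ⟨x, hx, hx0⟩ := hf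
    exact ⟨x.1, x.2, fun h => hx0 (Subtype.ext h), sub_eq_zero.1 (congrArg Subtype.val hx)⟩

end

/-- Proposition 3.3(1): if `ℳ` is a collection of proper subrings of `S`
covering `⋃_{0 ≠ x ∈ J} C_S(x)`, then `{S^{1+x} : x ∈ J} ∪ {M ⊕ J : M ∈ ℳ}` is a cover of
`R = A(n,q1,q2)`: all members are proper subrings of `R` whose union is `R`. -/
theorem AGL_cover_of_centralizer_cover
    (p d1 d2 n : ℕ) (hp : p.Prime) (hd1 : 1 ≤ d1) (hd2 : 1 ≤ d2) (hn : 1 ≤ n)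
    (F : Type) [Field F] [Fintype F] (F1 F2 : Subfield F)
    (hF1 : Nat.card F1 = p ^ d1) (hF2 : Nat.card F2 = p ^ d2)
    (hF : Nat.card F = p ^ Nat.lcm d1 d2) (hcomp : F1 ⊔ F2 = ⊤)
    (ℳ : Set (NonUnitalSubring ↥(AGL n F1 F2)))
    (hproper : ∀ M ∈ ℳ, (M : Set ↥(AGL n F1 F2)) ⊆ AGLS n F1 F2 ∧
      (M : Set ↥(AGL n F1 F2)) ≠ AGLS n F1 F2)
    (hcov : (⋃ x ∈ {x ∈ AGLJ n F1 F2 | x ≠ 0}, {s ∈ AGLS n F1 F2 | s * x = x * s}) ⊆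
      ⋃ M ∈ ℳ, (M : Set ↥(AGL n F1 F2))) :
    (∀ x ∈ AGLJ n F1 F2, ∃ T : NonUnitalSubring ↥(AGL n F1 F2), T ≠ ⊤ ∧
      (T : Set ↥(AGL n F1 F2)) = (fun s => s + s * x - x * s) '' AGLS n F1 F2) ∧
    (∀ M ∈ ℳ, ∃ T : NonUnitalSubring ↥(AGL n F1 F2), T ≠ ⊤ ∧
      (T : Set ↥(AGL n F1 F2)) = {r | ∃ m ∈ M, ∃ x ∈ AGLJ n F1 F2, r = m + x}) ∧
    (∀ r : ↥(AGL n F1 F2),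
      (∃ x ∈ AGLJ n F1 F2, r ∈ (fun s => s + s * x - x * s) '' AGLS n F1 F2) ∨
      (∃ M ∈ ℳ, ∃ m ∈ M, ∃ x ∈ AGLJ n F1 F2, r = m + x)) := by
  refine ⟨fun x hx => ⟨AGLSconj x hx, AGLSconj_ne_top hn x hx, rfl⟩,
    fun M hM => ⟨addJ M, addJ_ne_top M (hproper M hM).1 (hproper M hM).2, rfl⟩, fun r => ?_⟩
  obtain ⟨s, hs, v, hv, rfl⟩ := exists_AGLS_add_AGLJ r
  rcases exists_centralized_or_surj s with ⟨x, hx, hx0, hsx⟩ | hsurj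
  · right
    have hmem := hcov (Set.mem_biUnion (show x ∈ {x ∈ AGLJ n F1 F2 | x ≠ 0} from ⟨hx, hx0⟩)
      (show s ∈ {s ∈ AGLS n F1 F2 | s * x = x * s} from ⟨hs, hsx⟩))
    obtain ⟨M, hM, hsM⟩ := Set.mem_iUnion₂.1 hmem
    exact ⟨M, hM, s, hsM, v, hv, rfl⟩
  · left
    obtain ⟨x, hx, rfl⟩ := hsurj v hv
    exact ⟨x, hx, s, hs, add_sub_assoc _ _ _⟩
end
end
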